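/- arXiv:1710.08637 — 2 statements merged into one kernel-verified Lean document; each statement's English description precedes it below -/
import Mathlib

section
/- In the two-class ±1 model, the plain Euclidean nearest-neighbor rule (c = 1) misclassifies with probability decaying at exponential rate I: one has I > 0 and lim_{d→∞} (1/d) · log P(w is assigned class C₂ under the rule with c = 1) = −I. -/
/-!
Two-class ±1 model (CONTEXT 0).  The sample point consists of the base vectors
`m₁, m₂` (uniform on `{-1,1}^d`), the noise vectors `Y, Ỹ, Ȳ` (i.i.d. ±1 with
`P(+1) = 1-ρ`), the per-block tie-breaking fair coins and the final
tie-breaking fair coin.  STATEMENT 0: the plain Euclidean rule (`c = 1`)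
misclassifies with probability of exponential rate `I = I(0) > 0`.
-/

open MeasureTheory Filter
open scoped ENNReal

noncomputable section

/-- Law of a ±1-valued coordinate: `+1` with probability `1-ρ`, `-1` with probability `ρ`. -/
def signLaw (ρ : ℝ) : Measure ℝ :=
  ENNReal.ofReal (1 - ρ) • Measure.dirac 1 + ENNReal.ofReal ρ • Measure.dirac (-1)

/-- A fair coin on `Bool`. -/
def coinLaw : Measure Bool :=
  (1 / 2 : ℝ≥0∞) • Measure.dirac true + (1 / 2 : ℝ≥0∞) • Measure.dirac false

/-- Sample space of the two-class ±1 model with `c` segments: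
`(m₁, m₂, Y, Ỹ, Ȳ, per-block coins, final coin)`. -/
abbrev SignSpace (d c : ℕ) : Type :=
  (Fin d → ℝ) × (Fin d → ℝ) × (Fin d → ℝ) × (Fin d → ℝ) × (Fin d → ℝ) ×
    (Fin c → Bool) × Bool

/-- The joint law of the two-class ±1 model: `m₁, m₂` uniform on `{-1,1}^d`
(i.e. `signLaw (1/2)` coordinatewise), `Y, Ỹ, Ȳ` with i.i.d. `signLaw ρ`
coordinates, and independent fair tie-breaking coins. -/
def signModel (ρ : ℝ) (d c : ℕ) : Measure (SignSpace d c) :=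
  (Measure.pi fun _ : Fin d => signLaw (1 / 2)).prod <|
    (Measure.pi fun _ : Fin d => signLaw (1 / 2)).prod <|
      (Measure.pi fun _ : Fin d => signLaw ρ).prod <|
        (Measure.pi fun _ : Fin d => signLaw ρ).prod <|
          (Measure.pi fun _ : Fin d => signLaw ρ).prod <|
            (Measure.pi fun _ : Fin c => coinLaw).prod coinLaw

/-- The `c`-segmentation rule assigns the test word `w` to class `C₂`, given the
dictionary words `w1 ∈ C₁` and `w2 ∈ C₂`.  The coordinates are split into `c`
consecutive blocks of length `d / c`; block `j` votes for class 2 if `w` is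
strictly closer (in Euclidean distance, equivalently squared Euclidean
distance) to `w2` than to `w1` on that block, for class 1 if strictly closer to
`w1`, and according to the fair coin `coins j` in case of a tie; `w` is
assigned class `C₂` if a strict majority of blocks votes for class 2, or if
exactly half do and the final fair coin `fc` comes up heads. -/
def classifiedC2 {d c : ℕ} (w w1 w2 : Fin d → ℝ) (coins : Fin c → Bool) (fc : Bool) : Prop :=
  let dist2 : (Fin d → ℝ) → Fin c → ℝ := fun v j =>
    ∑ i : Fin d, if i.val / (d / c) = j.val then (w i - v i) ^ 2 else 0
  let vote2 : Fin c → Prop := fun j =>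
    dist2 w2 j < dist2 w1 j ∨ (dist2 w1 j = dist2 w2 j ∧ coins j = true)
  let V : ℕ := {j : Fin c | vote2 j}.ncard
  c < 2 * V ∨ (2 * V = c ∧ fc = true)

/-- The event that the test word `w = Ȳ × m₁` (distributed as a word of class `C₁`)
is assigned class `C₂` by the `c`-segmentation rule, with dictionary words
`w¹ = Y × m₁` and `w² = Ỹ × m₂` (coordinatewise products). -/
def signAssignedC2 (d c : ℕ) : Set (SignSpace d c) :=
  {ω | classifiedC2
        (fun i => ω.2.2.2.2.1 i * ω.1 i)
        (fun i => ω.2.2.1 i * ω.1 i)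
        (fun i => ω.2.2.2.1 i * ω.2.1 i)
        ω.2.2.2.2.2.1 ω.2.2.2.2.2.2}

/-- The moment generating function `E[e^{tX}]` of the random variable `X` with
`P(X = 1) = ρ(1-ρ)`, `P(X = 0) = 1/2`, `P(X = -1) = (1 - 2ρ + 2ρ²)/2`. -/
def mgfX (ρ t : ℝ) : ℝ :=
  ρ * (1 - ρ) * Real.exp t + 1 / 2 + (1 - 2 * ρ + 2 * ρ ^ 2) / 2 * Real.exp (-t)

/-- The Cramér rate function `I(x) = sup_t (t x - log E[e^{tX}])` of `X`. -/
def rateI (ρ x : ℝ) : ℝ := ⨆ t : ℝ, (t * x - Real.log (mgfX ρ t))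

/-!
Up to the factor `1 / 4`, the difference of the two squared distances is a sum `S` of `d`
independent copies of `X`. The rule errs if `S > 0`, and with probability `1 / 2` if `S = 0`, so the
error probability lies between `P(S ≥ 0) / 2` and `P(S ≥ 0)`, and Cramér's theorem applies.

Its upper bound is Chernoff's. For the lower bound, tilt the law of the summands by a parameter
`t ≥ 0` under which the mean becomes `a`: by the central limit theorem the tilted probability of
`d a ≤ S ≤ d a + √d` stays away from zero, and undoing the tilt on that event loses, besides the
expected exponential factor, at most `exp (t √d)`, which is invisible at exponential scale.

The parameter that centres `X` minimises its moment generating function `p eᵗ + 1 / 2 + q e⁻ᵗ`, and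
is explicit because `p eᵗ + q e⁻ᵗ` is `2 √(p q)` plus a square. As `q - p = (1 - 2 ρ)² / 2 ≥ 0` it
is nonnegative, and for `ρ ≠ 1 / 2` the minimum is below the value `1` taken at `t = 0`.
-/

section Cramer

open ProbabilityTheory
open scoped Topology

lemma pi_tilted_sum {ι : Type*} [Fintype ι] {α : ι → Type*} [∀ i, MeasurableSpace (α i)]
    (μ : ∀ i, Measure (α i)) [∀ i, SigmaFinite (μ i)] (f : ∀ i, α i → ℝ) :
    (Measure.pi μ).tilted (fun x ↦ ∑ i, f i (x i)) =
      Measure.pi fun i ↦ (μ i).tilted (f i) := by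
  refine (Measure.pi_eq fun s hs ↦ ?_).symm
  simp_rw [tilted_apply_eq_ofReal_integral' _ (MeasurableSet.univ_pi hs),
    tilted_apply_eq_ofReal_integral' _ (hs _), Real.exp_sum,
    integral_fintype_prod_eq_prod (fun i y ↦ Real.exp (f i y)), ← Finset.prod_div_distrib]
  rw [Measure.restrict_pi_pi,
    integral_fintype_prod_eq_prod (fun i y ↦ Real.exp (f i y) / ∫ z, Real.exp (f i z) ∂μ i),
    ENNReal.ofReal_prod_of_nonneg]
  exact fun i _ ↦ by positivity

lemma exp_mul_measureReal_tilted_le {Ω : Type*} [MeasurableSpace Ω] {μ : Measure Ω}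
    [IsFiniteMeasure μ] {X : Ω → ℝ} {t b : ℝ} {s : Set Ω} (ht : 0 ≤ t)
    (hint : Integrable (fun ω ↦ Real.exp (t * X ω)) μ) (hs : ∀ ω ∈ s, X ω ≤ b) :
    Real.exp (cgf X μ t - t * b) * (μ.tilted fun ω ↦ t * X ω).real s ≤ μ.real s := by
  have hdens : (μ.tilted fun ω ↦ t * X ω) s ≤
      ENNReal.ofReal (Real.exp (t * b - cgf X μ t)) * μ s := by
    rw [tilted_mul_apply_cgf s hint, ← setLIntegral_const]
    refine setLIntegral_mono measurable_const fun ω hω ↦ ?_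
    gcongr
    exact hs ω hω
  have hreal := ENNReal.toReal_mono (by finiteness) hdens
  rw [ENNReal.toReal_mul, ENNReal.toReal_ofReal (by positivity)] at hreal
  calc Real.exp (cgf X μ t - t * b) * (μ.tilted fun ω ↦ t * X ω).real s
      ≤ Real.exp (cgf X μ t - t * b) * (Real.exp (t * b - cgf X μ t) * μ.real s) := by
        gcongr; exact hreal
    _ = μ.real s := by rw [← mul_assoc, ← Real.exp_add]; simp

lemma gaussianReal_Icc_pos (m : ℝ) {v : NNReal} (hv : v ≠ 0) {a b : ℝ} (hab : a < b) :
    0 < gaussianReal m v (Set.Icc a b) := by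
  refine pos_iff_ne_zero.2 fun h ↦ ?_
  have := gaussianReal_absolutelyContinuous' m hv h
  simp only [Real.volume_Icc, ENNReal.ofReal_eq_zero] at this
  linarith

lemma map_infinitePi_fin {α : Type*} [MeasurableSpace α] (ν : Measure α)
    [IsProbabilityMeasure ν] (n : ℕ) :
    (Measure.infinitePi fun _ : ℕ ↦ ν).map (fun x (i : Fin n) ↦ x i) =
      Measure.pi fun _ ↦ ν := by
  have hindep : iIndepFun (fun (i : Fin n) (x : ℕ → α) ↦ x i)
      (Measure.infinitePi fun _ ↦ ν) :=
    (iIndepFun_infinitePi fun _ ↦ measurable_id).precomp Fin.val_injective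
  rw [(iIndepFun_iff_map_fun_eq_pi_map fun i ↦ (measurable_pi_apply _).aemeasurable).1 hindep]
  simp_rw [Measure.infinitePi_map_eval]

lemma tendsto_pi_normalized_sum {ν : Measure ℝ} [IsProbabilityMeasure ν] (hν : MemLp id 2 ν)
    {s : Set ℝ} (hs : MeasurableSet s)
    (hfrontier : gaussianReal 0 Var[id; ν].toNNReal (frontier s) = 0) :
    Tendsto (fun n : ℕ ↦ (Measure.pi fun _ : Fin n ↦ ν)
        {x | (√n)⁻¹ * (∑ i, x i - n * ∫ y, y ∂ν) ∈ s})
      atTop (𝓝 (gaussianReal 0 Var[id; ν].toNNReal s)) := by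
  set P := Measure.infinitePi fun _ : ℕ ↦ ν
  have heval (i : ℕ) : HasLaw (fun x : ℕ → ℝ ↦ x i) ν P :=
    ⟨(measurable_pi_apply i).aemeasurable, Measure.infinitePi_map_eval _ i⟩
  have hmemLp : MemLp (fun x : ℕ → ℝ ↦ x 0) 2 P :=
    hν.comp_measurePreserving ⟨measurable_pi_apply 0, (heval 0).map_eq⟩
  have hclt := (tendstoInDistribution_inv_sqrt_mul_sum_sub
    (X := fun (i : ℕ) (x : ℕ → ℝ) ↦ x i) (by rw [(heval 0).variance_eq]; exact HasLaw.id)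
    hmemLp (iIndepFun_infinitePi fun _ ↦ measurable_id)
    fun i ↦ (heval i).identDistrib (heval 0)).tendsto
  have hlim := ProbabilityMeasure.tendsto_measure_of_null_frontier_of_tendsto' hclt (E := s)
    (by simpa using hfrontier)
  simp only [ProbabilityMeasure.coe_mk, Measure.map_id] at hlim
  refine hlim.congr fun n ↦ ?_
  have hcoords : Measurable fun (x : ℕ → ℝ) (i : Fin n) ↦ x i :=
    measurable_pi_lambda _ fun i ↦ measurable_pi_apply _
  have hsum : Measurable fun x : Fin n → ℝ ↦ (√n)⁻¹ * (∑ i, x i - n * ∫ y, y ∂ν) := by fun_prop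
  rw [← map_infinitePi_fin, (heval 0).integral_eq]
  simp_rw [← Fin.sum_univ_eq_sum_range]
  exact (Measure.map_apply (hsum.comp hcoords) hs).trans
    (Measure.map_apply hcoords (hsum hs)).symm

lemma ae_pi_sum_eq_of_variance_eq_zero {ι : Type*} [Fintype ι] {ν : Measure ℝ}
    [IsProbabilityMeasure ν] (hν : MemLp id 2 ν) (hvar : Var[id; ν] = 0) :
    ∀ᵐ x ∂Measure.pi fun _ : ι ↦ ν, ∑ i, x i = Fintype.card ι * ∫ y, y ∂ν := by
  have hcoord (i : ι) : ∀ᵐ x ∂Measure.pi fun _ : ι ↦ ν, x i = ∫ y, y ∂ν :=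
    (measurePreserving_eval (fun _ : ι ↦ ν) i).quasiMeasurePreserving.ae
      (ae_eq_integral_of_variance_eq_zero hν hvar)
  filter_upwards [ae_all_iff.2 hcoord] with x hx
  simp [hx]

lemma exists_eventually_le_pi_sum_mem_Icc {ν : Measure ℝ} [IsProbabilityMeasure ν]
    (hν : MemLp id 2 ν) :
    ∃ δ > 0, ∀ᶠ n : ℕ in atTop, δ ≤ (Measure.pi fun _ : Fin n ↦ ν).real
      {x | ∑ i, x i ∈ Set.Icc (n * ∫ y, y ∂ν) (n * ∫ y, y ∂ν + √n)} := by
  rcases eq_or_ne Var[id; ν] 0 with hvar | hvar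
  · refine ⟨1, one_pos, .of_forall fun n ↦ le_of_eq ?_⟩
    rw [measureReal_congr (eventuallyEq_univ.2 ?_), probReal_univ]
    filter_upwards [ae_pi_sum_eq_of_variance_eq_zero (ι := Fin n) hν hvar] with x hx
    simp [hx]
  · have hv : Var[id; ν].toNNReal ≠ 0 := by simpa using (variance_nonneg id ν).lt_of_ne' hvar
    have := nullSingletonClass_gaussianReal (μ := 0) hv
    have hpos : 0 < (gaussianReal 0 Var[id; ν].toNNReal).real (Set.Icc 0 1) :=
      ENNReal.toReal_pos (gaussianReal_Icc_pos 0 hv zero_lt_one).ne' (measure_ne_top _ _)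
    have hlim := (ENNReal.tendsto_toReal (measure_ne_top _ _)).comp <|
      tendsto_pi_normalized_sum hν measurableSet_Icc
        (by rw [frontier_Icc zero_le_one]; exact (Set.toFinite {(0 : ℝ), 1}).measure_zero _)
    refine ⟨_, half_pos hpos, ?_⟩
    filter_upwards [hlim.eventually_const_le (half_lt_self hpos), eventually_gt_atTop 0]
      with n hn hn0
    refine hn.trans (measureReal_mono fun x hx ↦ ?_)
    have hsqrt : 0 < √n := by positivity
    rw [Set.mem_ofPred_eq, Set.mem_Icc, inv_mul_le_one₀ hsqrt] at hx
    exact ⟨sub_nonneg.1 (nonneg_of_mul_nonneg_right hx.1 (inv_pos.2 hsqrt)),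
      sub_le_iff_le_add'.1 hx.2⟩

lemma integrable_exp_mul_pi_sum {ι : Type*} [Fintype ι] {ν : Measure ℝ}
    [SigmaFinite ν] {t : ℝ} (ht : t ∈ integrableExpSet id ν) :
    Integrable (fun x : ι → ℝ ↦ Real.exp (t * ∑ i, x i)) (Measure.pi fun _ ↦ ν) := by
  simp_rw [Finset.mul_sum, Real.exp_sum]
  exact .fintype_prod fun _ ↦ ht

lemma cgf_pi_sum (ι : Type*) [Fintype ι] (ν : Measure ℝ) [SigmaFinite ν] (t : ℝ) :
    cgf (fun x : ι → ℝ ↦ ∑ i, x i) (Measure.pi fun _ ↦ ν) t = Fintype.card ι * cgf id ν t := by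
  simp_rw [cgf, mgf, Finset.mul_sum, Real.exp_sum,
    integral_fintype_prod_eq_pow (fun y : ℝ ↦ Real.exp (t * y)), Real.log_pow, id]

lemma measureReal_pi_sum_ge_le (ι : Type*) [Fintype ι] {ν : Measure ℝ} [IsFiniteMeasure ν]
    {t : ℝ} (ht : 0 ≤ t) (hint : t ∈ integrableExpSet id ν) (a : ℝ) :
    (Measure.pi fun _ : ι ↦ ν).real {x | Fintype.card ι * a ≤ ∑ i, x i} ≤
      Real.exp (Fintype.card ι * (cgf id ν t - t * a)) := by
  refine (measure_ge_le_exp_cgf _ ht (integrable_exp_mul_pi_sum hint)).trans_eq ?_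
  rw [cgf_pi_sum]
  ring_nf

lemma exists_eventually_le_measureReal_pi_sum_ge {ν : Measure ℝ} [IsProbabilityMeasure ν] {t : ℝ}
    (ht : 0 ≤ t) (hint : t ∈ interior (integrableExpSet id ν)) :
    ∃ δ > 0, ∀ᶠ n : ℕ in atTop,
      δ * Real.exp (n * (cgf id ν t - t * deriv (cgf id ν) t) - t * √n) ≤
        (Measure.pi fun _ : Fin n ↦ ν).real {x | n * deriv (cgf id ν) t ≤ ∑ i, x i} := by
  have hexp : t ∈ integrableExpSet id ν := interior_subset hint
  have := isProbabilityMeasure_tilted hexp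
  obtain ⟨δ, hδ, hbound⟩ := exists_eventually_le_pi_sum_mem_Icc (memLp_tilted_mul hint 2)
  have hmean := integral_tilted_mul_self hint
  simp only [id] at hmean hbound
  refine ⟨δ, hδ, ?_⟩
  filter_upwards [hbound] with n hn
  rw [hmean, ← pi_tilted_sum (fun _ : Fin n ↦ ν) fun _ y ↦ t * y] at hn
  simp_rw [← Finset.mul_sum] at hn
  have htilt := exp_mul_measureReal_tilted_le (b := n * deriv (cgf id ν) t + √n)
    (s := {x : Fin n → ℝ | ∑ i, x i ∈
      Set.Icc (n * deriv (cgf id ν) t) (n * deriv (cgf id ν) t + √n)})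
    ht (integrable_exp_mul_pi_sum hexp) fun x hx ↦ hx.2
  rw [cgf_pi_sum, Fintype.card_fin] at htilt
  calc δ * Real.exp (n * (cgf id ν t - t * deriv (cgf id ν) t) - t * √n)
      = Real.exp (n * cgf id ν t - t * (n * deriv (cgf id ν) t + √n)) * δ := by ring_nf
    _ ≤ (Measure.pi fun _ : Fin n ↦ ν).real {x | ∑ i, x i ∈
          Set.Icc (n * deriv (cgf id ν) t) (n * deriv (cgf id ν) t + √n)} :=
        (mul_le_mul_of_nonneg_left hn (by positivity)).trans htilt
    _ ≤ (Measure.pi fun _ : Fin n ↦ ν).real {x | n * deriv (cgf id ν) t ≤ ∑ i, x i} :=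
        measureReal_mono fun x hx ↦ hx.1

/-- Cramér's theorem, with the level parametrised by the tilt `t` under which it is the mean. -/
theorem tendsto_inv_mul_log_pi_sum_ge {ν : Measure ℝ} [IsProbabilityMeasure ν]
    {t : ℝ} (ht : 0 ≤ t) (hint : t ∈ interior (integrableExpSet id ν)) :
    Tendsto (fun n : ℕ ↦ 1 / (n : ℝ) * Real.log ((Measure.pi fun _ : Fin n ↦ ν).real
        {x | n * deriv (cgf id ν) t ≤ ∑ i, x i}))
      atTop (𝓝 (cgf id ν t - t * deriv (cgf id ν) t)) := by
  obtain ⟨δ, hδ, hlower⟩ := exists_eventually_le_measureReal_pi_sum_ge ht hint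
  set L := cgf id ν t - t * deriv (cgf id ν) t
  have hlim : Tendsto (fun n : ℕ ↦ 1 / (n : ℝ) * Real.log δ + L - t * (√n)⁻¹) atTop (𝓝 L) := by
    have hsqrt : Tendsto (fun n : ℕ ↦ (√n)⁻¹) atTop (𝓝 0) :=
      tendsto_inv_atTop_zero.comp (Real.tendsto_sqrt_atTop.comp tendsto_natCast_atTop_atTop)
    simpa using ((tendsto_one_div_atTop_nhds_zero_nat.mul_const (Real.log δ)).add_const L).sub
      (hsqrt.const_mul t)
  refine tendsto_of_tendsto_of_tendsto_of_le_of_le' hlim tendsto_const_nhds ?_ ?_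
  · filter_upwards [hlower, eventually_gt_atTop 0] with n hn hn0
    have hlog := Real.log_le_log (by positivity) hn
    rw [Real.log_mul hδ.ne' (by positivity), Real.log_exp] at hlog
    calc 1 / (n : ℝ) * Real.log δ + L - t * (√n)⁻¹
        = 1 / (n : ℝ) * (Real.log δ + (n * L - t * √n)) := by
          rw [← one_div √(n : ℝ), ← Real.sqrt_div_self']
          field_simp
          ring
      _ ≤ _ := by gcongr
  · filter_upwards [hlower, eventually_gt_atTop 0] with n hn hn0
    have hpos := lt_of_lt_of_le (by positivity) hn
    have hupper := measureReal_pi_sum_ge_le (Fin n) ht (interior_subset hint) (deriv (cgf id ν) t)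
    rw [Fintype.card_fin] at hupper
    have hlog := Real.log_le_log hpos hupper
    rw [Real.log_exp] at hlog
    calc _ ≤ 1 / (n : ℝ) * (n * L) := by gcongr
      _ = L := by field_simp

lemma abs_log_sub_log_le {c x y : ℝ} (hc : 0 < c) (hx : 0 ≤ x) (hlower : c * x ≤ y)
    (hupper : y ≤ x) : |Real.log y - Real.log x| ≤ |Real.log c| := by
  rcases hx.eq_or_lt' with rfl | hx
  · obtain rfl : y = 0 := by linarith
    simp
  have hlog := Real.log_le_log (by positivity) hlower
  rw [Real.log_mul hc.ne' hx.ne'] at hlog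
  have hlog' := Real.log_le_log (lt_of_lt_of_le (by positivity) hlower) hupper
  rw [abs_le]
  constructor <;> linarith [neg_abs_le (Real.log c), abs_nonneg (Real.log c)]

lemma tendsto_inv_mul_log_of_mul_le_of_le {a b : ℕ → ℝ} {c L : ℝ} (hc : 0 < c)
    (ha : ∀ n, 0 ≤ a n) (hlower : ∀ n, c * a n ≤ b n) (hupper : ∀ n, b n ≤ a n)
    (hL : Tendsto (fun n : ℕ ↦ 1 / (n : ℝ) * Real.log (a n)) atTop (𝓝 L)) :
    Tendsto (fun n : ℕ ↦ 1 / (n : ℝ) * Real.log (b n)) atTop (𝓝 L) := by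
  have hdiff : Tendsto (fun n : ℕ ↦ 1 / (n : ℝ) * (Real.log (b n) - Real.log (a n)))
      atTop (𝓝 0) := by
    refine squeeze_zero_norm (a := fun n : ℕ ↦ 1 / (n : ℝ) * |Real.log c|) (fun n ↦ ?_)
      (by simpa using tendsto_one_div_atTop_nhds_zero_nat.mul_const |Real.log c|)
    rw [norm_mul, Real.norm_of_nonneg (by positivity), Real.norm_eq_abs]
    exact mul_le_mul_of_nonneg_left (abs_log_sub_log_le hc (ha n) (hlower n) (hupper n))
      (by positivity)
  simpa [mul_sub] using hdiff.add hL

end Cramer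

section Model

open ProbabilityTheory

/-- The law of the random variable `X` whose moment generating function is `mgfX ρ`. -/
def gapLaw (ρ : ℝ) : Measure ℝ :=
  ENNReal.ofReal (ρ * (1 - ρ)) • Measure.dirac 1 + ENNReal.ofReal (1 / 2) • Measure.dirac 0 +
    ENNReal.ofReal ((1 - 2 * ρ + 2 * ρ ^ 2) / 2) • Measure.dirac (-1)

/-- For a single coordinate `(m₁, m₂, Y, Ỹ, Ȳ)`, the squared distance from `w` to `w¹` minus the
squared distance from `w` to `w²`, scaled by `1 / 4` so as to take values in `{-1, 0, 1}`. -/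
def coordGap (x : ℝ × ℝ × ℝ × ℝ × ℝ) : ℝ :=
  ((x.2.2.2.2 * x.1 - x.2.2.1 * x.1) ^ 2 - (x.2.2.2.2 * x.1 - x.2.2.2.1 * x.2.1) ^ 2) / 4

/-- The vector of coordinatewise distance gaps of a sample point. -/
def gaps {d c : ℕ} (ω : SignSpace d c) (i : Fin d) : ℝ :=
  coordGap (ω.1 i, ω.2.1 i, ω.2.2.1 i, ω.2.2.2.1 i, ω.2.2.2.2.1 i)

variable {ρ : ℝ}

lemma isProbabilityMeasure_signLaw (h0 : 0 ≤ ρ) (h1 : ρ ≤ 1) :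
    IsProbabilityMeasure (signLaw ρ) := by
  constructor
  simp [signLaw, ← ENNReal.ofReal_add (sub_nonneg.2 h1) h0]

instance isProbabilityMeasure_signLaw_half : IsProbabilityMeasure (signLaw (1 / 2)) :=
  isProbabilityMeasure_signLaw (by norm_num) (by norm_num)

instance isProbabilityMeasure_coinLaw : IsProbabilityMeasure coinLaw := by
  constructor
  simp [coinLaw, ENNReal.inv_two_add_inv_two]

lemma lintegral_signLaw (ρ : ℝ) (f : ℝ → ℝ≥0∞) :
    ∫⁻ x, f x ∂signLaw ρ = ENNReal.ofReal (1 - ρ) * f 1 + ENNReal.ofReal ρ * f (-1) := by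
  simp [signLaw]

lemma lintegral_signLaw_prod {β : Type*} [MeasurableSpace β] (ρ : ℝ) (ν : Measure β)
    [SFinite ν] {f : ℝ × β → ℝ≥0∞} (hf : Measurable f) :
    ∫⁻ x, f x ∂(signLaw ρ).prod ν =
      ENNReal.ofReal (1 - ρ) * ∫⁻ y, f (1, y) ∂ν + ENNReal.ofReal ρ * ∫⁻ y, f (-1, y) ∂ν := by
  rw [lintegral_prod _ hf.aemeasurable, lintegral_signLaw]

lemma lintegral_gapLaw (h0 : 0 ≤ ρ) (h1 : ρ ≤ 1) (f : ℝ → ℝ≥0∞) :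
    ∫⁻ x, f x ∂gapLaw ρ =
      ENNReal.ofReal ρ * ENNReal.ofReal (1 - ρ) * f 1 + ENNReal.ofReal (1 / 2) * f 0 +
        ENNReal.ofReal (1 / 2) * (ENNReal.ofReal ρ ^ 2 + ENNReal.ofReal (1 - ρ) ^ 2) * f (-1) := by
  have hsub : 0 ≤ 1 - ρ := sub_nonneg.2 h1
  have hloss : (1 - 2 * ρ + 2 * ρ ^ 2) / 2 = 1 / 2 * (ρ ^ 2 + (1 - ρ) ^ 2) := by ring
  simp only [gapLaw, hloss, lintegral_add_measure, lintegral_smul_measure, lintegral_dirac,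
    smul_eq_mul]
  rw [ENNReal.ofReal_mul h0, ENNReal.ofReal_mul (by norm_num : (0 : ℝ) ≤ 1 / 2),
    ENNReal.ofReal_add (by positivity) (by positivity), ENNReal.ofReal_pow h0,
    ENNReal.ofReal_pow hsub]

lemma measurable_coordGap : Measurable coordGap := by
  unfold coordGap
  fun_prop

lemma measurePreserving_coordGap (h0 : 0 ≤ ρ) (h1 : ρ ≤ 1) :
    MeasurePreserving coordGap
      ((signLaw (1 / 2)).prod ((signLaw (1 / 2)).prod ((signLaw ρ).prod
        ((signLaw ρ).prod (signLaw ρ))))) (gapLaw ρ) := by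
  have := isProbabilityMeasure_signLaw h0 h1
  refine ⟨measurable_coordGap, Measure.ext_of_lintegral _ fun f hf ↦ ?_⟩
  have hhalf : ENNReal.ofReal (1 / 2) + ENNReal.ofReal (1 / 2) = 1 := by
    rw [← ENNReal.ofReal_add (by norm_num) (by norm_num)]
    norm_num
  have hsum : ENNReal.ofReal ρ + ENNReal.ofReal (1 - ρ) = 1 := by
    rw [← ENNReal.ofReal_add h0 (sub_nonneg.2 h1)]
    simp
  rw [lintegral_map hf measurable_coordGap, lintegral_gapLaw h0 h1]
  have hcomp := hf.comp measurable_coordGap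
  simp only [Function.comp_def, coordGap] at hcomp ⊢
  simp (disch := fun_prop) only [lintegral_signLaw_prod, lintegral_signLaw, sub_half]
  generalize ENNReal.ofReal ρ = p at *
  generalize ENNReal.ofReal (1 - ρ) = q at *
  generalize ENNReal.ofReal (1 / 2) = h at *
  -- Factors `h + h = 1` and `p + q = 1` are inserted to make this a polynomial identity.
  calc _ = (h + h) * (p + q) * (p * q * (h + h) * f 1 + h * (p + q) ^ 2 * f 0 +
        h * (p ^ 2 + q ^ 2) * f (-1)) := by norm_num; ring
    _ = _ := by simp [hhalf, hsum]

lemma isProbabilityMeasure_gapLaw (h0 : 0 ≤ ρ) (h1 : ρ ≤ 1) :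
    IsProbabilityMeasure (gapLaw ρ) := by
  have := isProbabilityMeasure_signLaw h0 h1
  rw [← (measurePreserving_coordGap h0 h1).map_eq]
  exact Measure.isProbabilityMeasure_map measurable_coordGap.aemeasurable

lemma measurePreserving_zip_prod {ι α β γ : Type*} [Fintype ι] [MeasurableSpace α]
    [MeasurableSpace β] [MeasurableSpace γ] (μ : ι → Measure α) (ν : ι → Measure β)
    (τ : Measure γ) [∀ i, SigmaFinite (μ i)] [∀ i, SigmaFinite (ν i)] [SFinite τ] :
    MeasurePreserving
      (fun x : (ι → α) × (ι → β) × γ ↦ ((fun i ↦ (x.1 i, x.2.1 i) : ι → α × β), x.2.2))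
      ((Measure.pi μ).prod ((Measure.pi ν).prod τ))
      ((Measure.pi fun i ↦ (μ i).prod (ν i)).prod τ) :=
  ((measurePreserving_arrowProdEquivProdArrow α β ι μ ν).symm.prod (.id τ)).comp
    (measurePreserving_prodAssoc (Measure.pi μ) (Measure.pi ν) τ).symm

lemma measurePreserving_gaps_coins (h0 : 0 ≤ ρ) (h1 : ρ ≤ 1) (d c : ℕ) :
    MeasurePreserving (fun ω : SignSpace d c ↦ (gaps ω, ω.2.2.2.2.2)) (signModel ρ d c)
      ((Measure.pi fun _ ↦ gapLaw ρ).prod ((Measure.pi fun _ ↦ coinLaw).prod coinLaw)) := by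
  have := isProbabilityMeasure_signLaw h0 h1
  have := isProbabilityMeasure_gapLaw h0 h1
  set coins := (Measure.pi fun _ : Fin c ↦ coinLaw).prod coinLaw
  have hnoise := measurePreserving_zip_prod (fun _ : Fin d ↦ signLaw ρ)
    (fun _ ↦ signLaw ρ) coins
  have hnoises := (measurePreserving_zip_prod (fun _ : Fin d ↦ signLaw ρ) _ coins).comp
    ((MeasurePreserving.id _).prod hnoise)
  have hbase := (measurePreserving_zip_prod (fun _ : Fin d ↦ signLaw (1 / 2)) _ coins).comp
    ((MeasurePreserving.id _).prod hnoises)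
  have hbases := (measurePreserving_zip_prod (fun _ : Fin d ↦ signLaw (1 / 2)) _ coins).comp
    ((MeasurePreserving.id _).prod hbase)
  exact ((measurePreserving_pi _ _ fun _ ↦ measurePreserving_coordGap h0 h1).prod (.id coins)).comp
    hbases

lemma fin_one_majority_iff (p : Fin 1 → Prop) (q : Prop) :
    (1 < 2 * {j | p j}.ncard ∨ 2 * {j | p j}.ncard = 1 ∧ q) ↔ p 0 := by
  by_cases hp : p 0
  · have huniv : {j | p j} = Set.univ :=
      Set.eq_univ_of_forall fun j ↦ by rwa [Set.mem_ofPred_eq, Subsingleton.elim j 0]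
    simp [huniv, hp]
  · have hempty : {j | p j} = ∅ :=
      Set.eq_empty_of_forall_notMem fun j ↦ by rwa [Set.mem_ofPred_eq, Subsingleton.elim j 0]
    simp [hempty, hp]

lemma classifiedC2_one_iff {d : ℕ} (w w1 w2 : Fin d → ℝ) (coins : Fin 1 → Bool) (fc : Bool) :
    classifiedC2 w w1 w2 coins fc ↔
      ∑ i, (w i - w2 i) ^ 2 < ∑ i, (w i - w1 i) ^ 2 ∨
        ∑ i, (w i - w1 i) ^ 2 = ∑ i, (w i - w2 i) ^ 2 ∧ coins 0 = true := by
  have hblock (i : Fin d) : (i : ℕ) / (d / 1) = ((0 : Fin 1) : ℕ) := by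
    rw [Nat.div_one]
    exact Nat.div_eq_of_lt i.2
  refine (fin_one_majority_iff _ _).trans ?_
  simp only [hblock, if_true]

lemma mem_signAssignedC2_one_iff {d : ℕ} (ω : SignSpace d 1) :
    ω ∈ signAssignedC2 d 1 ↔
      0 < ∑ i, gaps ω i ∨ ∑ i, gaps ω i = 0 ∧ ω.2.2.2.2.2.1 0 = true := by
  refine (classifiedC2_one_iff _ _ _ _ _).trans ?_
  simp only [gaps, coordGap, ← Finset.sum_div, Finset.sum_sub_distrib]
  rw [div_eq_zero_iff, or_iff_left four_ne_zero, sub_eq_zero, div_pos_iff_of_pos_right four_pos,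
    sub_pos]

lemma coinLaw_real_true : coinLaw.real {true} = 1 / 2 := by
  simp [coinLaw, Measure.real]

lemma signModel_real_gaps_coins_preimage (h0 : 0 ≤ ρ) (h1 : ρ ≤ 1) {d c : ℕ}
    {s : Set (Fin d → ℝ)} (hs : MeasurableSet s) (k : Set (Fin c → Bool)) :
    (signModel ρ d c).real {ω | gaps ω ∈ s ∧ ω.2.2.2.2.2.1 ∈ k} =
      (Measure.pi fun _ ↦ gapLaw ρ).real s * (Measure.pi fun _ ↦ coinLaw).real k := by
  have := isProbabilityMeasure_gapLaw h0 h1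
  have hrect : MeasurableSet (s ×ˢ (k ×ˢ (Set.univ : Set Bool))) :=
    hs.prod (k.toFinite.measurableSet.prod .univ)
  have hpre := (measurePreserving_gaps_coins h0 h1 d c).measureReal_preimage
    hrect.nullMeasurableSet
  rw [measureReal_prod_prod, measureReal_prod_prod, probReal_univ, mul_one] at hpre
  rw [← hpre]
  congr 1
  ext ω
  simp

lemma measurableSet_sum_nonneg (ι : Type*) [Fintype ι] :
    MeasurableSet {x : ι → ℝ | 0 ≤ ∑ i, x i} :=
  measurableSet_le measurable_const (by fun_prop)

lemma isProbabilityMeasure_signModel (h0 : 0 ≤ ρ) (h1 : ρ ≤ 1) (d c : ℕ) :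
    IsProbabilityMeasure (signModel ρ d c) := by
  have := isProbabilityMeasure_signLaw h0 h1
  unfold signModel
  infer_instance

lemma signModel_real_signAssignedC2_one_le (h0 : 0 ≤ ρ) (h1 : ρ ≤ 1) (d : ℕ) :
    (signModel ρ d 1).real (signAssignedC2 d 1) ≤
      (Measure.pi fun _ : Fin d ↦ gapLaw ρ).real {x | 0 ≤ ∑ i, x i} := by
  have := isProbabilityMeasure_signModel h0 h1 d 1
  have hprob := signModel_real_gaps_coins_preimage h0 h1 (measurableSet_sum_nonneg (Fin d))
    (Set.univ : Set (Fin 1 → Bool))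
  rw [probReal_univ, mul_one] at hprob
  rw [← hprob]
  refine measureReal_mono fun ω hω ↦ ⟨?_, trivial⟩
  rcases (mem_signAssignedC2_one_iff ω).1 hω with hgt | ⟨heq, -⟩
  exacts [hgt.le, heq.ge]

lemma half_mul_le_signModel_real_signAssignedC2_one (h0 : 0 ≤ ρ) (h1 : ρ ≤ 1) (d : ℕ) :
    1 / 2 * (Measure.pi fun _ : Fin d ↦ gapLaw ρ).real {x | 0 ≤ ∑ i, x i} ≤
      (signModel ρ d 1).real (signAssignedC2 d 1) := by
  have := isProbabilityMeasure_signModel h0 h1 d 1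
  have hprob := signModel_real_gaps_coins_preimage h0 h1 (measurableSet_sum_nonneg (Fin d))
    {coins : Fin 1 → Bool | coins 0 = true}
  have hcoin : (Measure.pi fun _ : Fin 1 ↦ coinLaw).real {coins | coins 0 = true} = 1 / 2 :=
    ((measurePreserving_eval (fun _ : Fin 1 ↦ coinLaw) 0).measureReal_preimage
      (measurableSet_singleton true).nullMeasurableSet).trans coinLaw_real_true
  rw [hcoin, mul_comm] at hprob
  rw [← hprob]
  refine measureReal_mono fun ω hω ↦ (mem_signAssignedC2_one_iff ω).2 ?_
  exact hω.1.lt_or_eq.imp_right fun heq ↦ ⟨heq.symm, hω.2⟩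

lemma integrable_ofReal_smul_dirac (f : ℝ → ℝ) (r a : ℝ) :
    Integrable f (ENNReal.ofReal r • Measure.dirac a) :=
  (integrable_dirac (by simp)).smul_measure ENNReal.ofReal_ne_top

lemma integrable_gapLaw (ρ : ℝ) (f : ℝ → ℝ) : Integrable f (gapLaw ρ) :=
  ((integrable_ofReal_smul_dirac f _ _).add_measure
    (integrable_ofReal_smul_dirac f _ _)).add_measure (integrable_ofReal_smul_dirac f _ _)

lemma integral_gapLaw (h0 : 0 ≤ ρ) (h1 : ρ ≤ 1) (f : ℝ → ℝ) :
    ∫ x, f x ∂gapLaw ρ =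
      ρ * (1 - ρ) * f 1 + 1 / 2 * f 0 + (1 - 2 * ρ + 2 * ρ ^ 2) / 2 * f (-1) := by
  have hwin : 0 ≤ ρ * (1 - ρ) := mul_nonneg h0 (sub_nonneg.2 h1)
  have hloss : 0 ≤ (1 - 2 * ρ + 2 * ρ ^ 2) / 2 := by nlinarith [sq_nonneg (1 - ρ)]
  have hint := integrable_ofReal_smul_dirac f
  rw [gapLaw, integral_add_measure ((hint _ _).add_measure (hint _ _)) (hint _ _),
    integral_add_measure (hint _ _) (hint _ _)]
  simp [ENNReal.toReal_ofReal hwin, ENNReal.toReal_ofReal hloss]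

lemma mgf_gapLaw (h0 : 0 ≤ ρ) (h1 : ρ ≤ 1) : mgf id (gapLaw ρ) = mgfX ρ := by
  ext t
  simp [mgf, integral_gapLaw h0 h1, mgfX]

end Model

section Rate

open ProbabilityTheory
open scoped Topology

variable {ρ : ℝ}

/-- The minimizer of `mgfX ρ`, that is, the tilting parameter which centres `gapLaw ρ`: it
balances the two exponential terms of `mgfX ρ`. -/
def centringTilt (ρ : ℝ) : ℝ :=
  Real.log ((1 - 2 * ρ + 2 * ρ ^ 2) / 2 / (ρ * (1 - ρ))) / 2

lemma mul_exp_centringTilt_sq (h0 : 0 < ρ) (h1 : ρ < 1) :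
    ρ * (1 - ρ) * Real.exp (centringTilt ρ) ^ 2 = (1 - 2 * ρ + 2 * ρ ^ 2) / 2 := by
  have hwin : 0 < ρ * (1 - ρ) := mul_pos h0 (sub_pos.2 h1)
  have hloss : 0 < (1 - 2 * ρ + 2 * ρ ^ 2) / 2 := by nlinarith [sq_nonneg (1 - ρ)]
  rw [← Real.exp_nat_mul, centringTilt, Nat.cast_ofNat, mul_div_cancel₀ _ two_ne_zero,
    Real.exp_log (div_pos hloss hwin), mul_div_cancel₀ _ hwin.ne']

lemma mgfX_eq_mgfX_centringTilt_add (h0 : 0 < ρ) (h1 : ρ < 1) (t : ℝ) :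
    mgfX ρ t = mgfX ρ (centringTilt ρ) +
      ρ * (1 - ρ) * Real.exp (-t) * (Real.exp t - Real.exp (centringTilt ρ)) ^ 2 := by
  simp only [mgfX, ← mul_exp_centringTilt_sq h0 h1, Real.exp_neg]
  field_simp
  ring

lemma mgfX_centringTilt_le (h0 : 0 < ρ) (h1 : ρ < 1) (t : ℝ) :
    mgfX ρ (centringTilt ρ) ≤ mgfX ρ t := by
  have := sub_pos.2 h1
  rw [mgfX_eq_mgfX_centringTilt_add h0 h1 t]
  exact le_add_of_nonneg_right (by positivity)

lemma mgfX_pos (h0 : 0 ≤ ρ) (h1 : ρ ≤ 1) (t : ℝ) : 0 < mgfX ρ t := by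
  have := isProbabilityMeasure_gapLaw h0 h1
  rw [← mgf_gapLaw h0 h1]
  exact mgf_pos (integrable_gapLaw ρ _)

lemma mgfX_zero (ρ : ℝ) : mgfX ρ 0 = 1 := by
  simp only [mgfX, neg_zero, Real.exp_zero]
  ring

lemma centringTilt_nonneg (h0 : 0 < ρ) (h1 : ρ < 1) : 0 ≤ centringTilt ρ := by
  refine div_nonneg (Real.log_nonneg ?_) zero_le_two
  rw [one_le_div (mul_pos h0 (sub_pos.2 h1))]
  linarith [sq_nonneg (1 - 2 * ρ)]

lemma exp_centringTilt_ne_one (h0 : 0 < ρ) (h1 : ρ < 1) (hρ : ρ ≠ 1 / 2) :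
    Real.exp (centringTilt ρ) ≠ 1 := by
  intro hone
  have hbalance := mul_exp_centringTilt_sq h0 h1
  rw [hone] at hbalance
  have hsq : (1 - 2 * ρ) ^ 2 = 0 := by linarith
  exact hρ (by linarith [pow_eq_zero_iff two_ne_zero |>.1 hsq])

lemma mgfX_centringTilt_lt_one (h0 : 0 < ρ) (h1 : ρ < 1) (hρ : ρ ≠ 1 / 2) :
    mgfX ρ (centringTilt ρ) < 1 := by
  have hne := sub_ne_zero.2 (exp_centringTilt_ne_one h0 h1 hρ).symm
  have := sub_pos.2 h1
  rw [← mgfX_zero ρ, mgfX_eq_mgfX_centringTilt_add h0 h1 0, Real.exp_zero]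
  exact lt_add_of_pos_right _ (by positivity)

lemma rateI_zero (h0 : 0 < ρ) (h1 : ρ < 1) :
    rateI ρ 0 = -Real.log (mgfX ρ (centringTilt ρ)) := by
  have hmax (t : ℝ) : t * 0 - Real.log (mgfX ρ t) ≤ -Real.log (mgfX ρ (centringTilt ρ)) := by
    rw [mul_zero, zero_sub, neg_le_neg_iff]
    exact Real.log_le_log (mgfX_pos h0.le h1.le _) (mgfX_centringTilt_le h0 h1 t)
  refine le_antisymm (ciSup_le hmax) (le_ciSup_of_le ⟨_, Set.forall_mem_range.2 hmax⟩
    (centringTilt ρ) ?_)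
  simp

lemma rateI_zero_pos (h0 : 0 < ρ) (h1 : ρ < 1) (hρ : ρ ≠ 1 / 2) : 0 < rateI ρ 0 := by
  rw [rateI_zero h0 h1, neg_pos]
  exact Real.log_neg (mgfX_pos h0.le h1.le _) (mgfX_centringTilt_lt_one h0 h1 hρ)

lemma cgf_gapLaw_centringTilt (h0 : 0 < ρ) (h1 : ρ < 1) :
    cgf id (gapLaw ρ) (centringTilt ρ) = -rateI ρ 0 := by
  rw [rateI_zero h0 h1, neg_neg, cgf, mgf_gapLaw h0.le h1.le]

lemma deriv_cgf_gapLaw_centringTilt (h0 : 0 < ρ) (h1 : ρ < 1) :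
    deriv (cgf id (gapLaw ρ)) (centringTilt ρ) = 0 := by
  refine IsLocalMin.deriv_eq_zero (.of_forall fun t ↦ ?_)
  rw [cgf, cgf, mgf_gapLaw h0.le h1.le]
  exact Real.log_le_log (mgfX_pos h0.le h1.le _) (mgfX_centringTilt_le h0 h1 t)

lemma tendsto_inv_mul_log_pi_gapLaw (h0 : 0 < ρ) (h1 : ρ < 1) :
    Tendsto (fun d : ℕ ↦ 1 / (d : ℝ) *
        Real.log ((Measure.pi fun _ : Fin d ↦ gapLaw ρ).real {x | 0 ≤ ∑ i, x i}))
      atTop (𝓝 (-rateI ρ 0)) := by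
  have := isProbabilityMeasure_gapLaw h0.le h1.le
  have hint : centringTilt ρ ∈ interior (integrableExpSet id (gapLaw ρ)) := by
    have huniv : integrableExpSet id (gapLaw ρ) = Set.univ :=
      Set.eq_univ_of_forall fun t ↦ integrable_gapLaw ρ _
    simp [huniv]
  simpa only [deriv_cgf_gapLaw_centringTilt h0 h1, cgf_gapLaw_centringTilt h0 h1, mul_zero,
    sub_zero] using tendsto_inv_mul_log_pi_sum_ge (centringTilt_nonneg h0 h1) hint

end Rate

theorem euclidean_rule_misclassification_rate_general (ρ : ℝ) (hρ0 : 0 < ρ) (hρ1 : ρ < 1)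
    (hρ : ρ ≠ 1 / 2) :
    0 < rateI ρ 0 ∧
      Tendsto (fun d : ℕ ↦
          (1 / (d : ℝ)) * Real.log ((signModel ρ d 1 (signAssignedC2 d 1)).toReal))
        atTop (nhds (-(rateI ρ 0))) :=
  ⟨rateI_zero_pos hρ0 hρ1 hρ,
    tendsto_inv_mul_log_of_mul_le_of_le one_half_pos (fun _ ↦ measureReal_nonneg)
      (half_mul_le_signModel_real_signAssignedC2_one hρ0.le hρ1.le)
      (signModel_real_signAssignedC2_one_le hρ0.le hρ1.le)
      (tendsto_inv_mul_log_pi_gapLaw hρ0 hρ1)⟩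

/-- in the two-class ±1 model, the plain Euclidean nearest-neighbor
rule (`c = 1`) misclassifies with probability decaying at exponential rate
`I = I(0) > 0`:  `lim_{d→∞} (1/d) log P(w assigned C₂ with c = 1) = -I`. -/
theorem euclidean_rule_misclassification_rate (ρ : ℝ) (hρ0 : 0 < ρ) (hρ : ρ < 1 / 2) :
    0 < rateI ρ 0 ∧
      Tendsto (fun d : ℕ =>
          (1 / (d : ℝ)) * Real.log ((signModel ρ d 1 (signAssignedC2 d 1)).toReal))
        atTop (nhds (-(rateI ρ 0))) :=
  euclidean_rule_misclassification_rate_general ρ hρ0 (by linarith) hρ.ne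

end
end

section
/- Let (c_m) be a sequence of positive integers with c_m → ∞ and let (p_m) ⊂ (0,1) be a sequence with log p_m → −∞ as m → ∞. For each m let Y₁,…,Y_{c_m} be i.i.d. Bernoulli random variables with success probability p_m. Then lim_{m→∞} log P(Σ_{j=1}^{c_m} Y_j ≥ c_m/2) / (c_m · log p_m) = 1/2; equivalently, the probability that at least half of c_m independent rare events of probability p_m occur behaves on the exponential scale like p_m^{c_m/2}. -/
/-!
STATEMENT 14 (CONTEXT 14).  Let `c_m → ∞` be positive integers and
`p_m ∈ (0,1)` with `log p_m → -∞`.  For i.i.d. Bernoulli(`p_m`) random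
variables `Y₁, …, Y_{c_m}` (value `1` with probability `p_m`, `0` with
probability `1 - p_m`, realized as the coordinates of the product measure),
`lim_{m→∞} log P(Σ_{j=1}^{c_m} Y_j ≥ c_m/2) / (c_m · log p_m) = 1/2`:
the probability that at least half of `c_m` independent rare events of
probability `p_m` occur behaves on the exponential scale like `p_m^{c_m/2}`.
-/

open MeasureTheory Filter
open scoped ENNReal

noncomputable section

/-- Law of a Bernoulli(`p`) coordinate: `1` with probability `p`, `0` with
probability `1-p`. -/
def bernLaw (p : ℝ) : Measure ℝ :=
  ENNReal.ofReal p • Measure.dirac 1 + ENNReal.ofReal (1 - p) • Measure.dirac 0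

/-!
The moment generating function of a Bernoulli(`p`) variable at `t = -log p` is `2 - p ≤ 2`, so the
Chernoff bound gives `P(a ≤ ∑ Yⱼ) ≤ 2ⁿ pᵃ`. Conversely, the sum is at least `a` as soon as
`⌈a⌉` prescribed variables equal `1`, an event of probability `p ^ ⌈a⌉`. On the scale `n log p` the
factor `2ⁿ` is negligible because `log p → -∞`, and the rounding of `a` is negligible because
`n → ∞`.
-/

open ProbabilityTheory
open scoped Topology

section SumOfCoordinates

variable {ι : Type*} [Fintype ι] (μ : ι → Measure ℝ) [∀ i, SigmaFinite (μ i)]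

lemma mgf_sum_measurePi (t : ℝ) :
    mgf (fun x : ι → ℝ => ∑ i, x i) (Measure.pi μ) t = ∏ i, mgf id (μ i) t := by
  simp only [mgf, Finset.mul_sum, Real.exp_sum, id]
  exact integral_fintype_prod_eq_prod fun (_ : ι) x => Real.exp (t * x)

lemma integrable_exp_mul_sum_measurePi {t : ℝ}
    (h : ∀ i, Integrable (fun x => Real.exp (t * x)) (μ i)) :
    Integrable (fun x : ι → ℝ => Real.exp (t * ∑ i, x i)) (Measure.pi μ) := by
  simpa only [Finset.mul_sum, Real.exp_sum] using Integrable.fintype_prod h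

end SumOfCoordinates

section Bernoulli

variable {p : ℝ}

instance isFiniteMeasure_bernLaw : IsFiniteMeasure (bernLaw p) := by
  have (q x : ℝ) : IsFiniteMeasure (ENNReal.ofReal q • Measure.dirac x) :=
    Measure.smul_finite _ ENNReal.ofReal_ne_top
  unfold bernLaw
  infer_instance

lemma integrable_bernLaw (f : ℝ → ℝ) : Integrable f (bernLaw p) :=
  have (q x : ℝ) : Integrable f (ENNReal.ofReal q • Measure.dirac x) :=
    (integrable_dirac enorm_lt_top).smul_measure ENNReal.ofReal_ne_top
  (this p 1).add_measure (this (1 - p) 0)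

lemma integral_bernLaw (hp₀ : 0 ≤ p) (hp₁ : p ≤ 1) (f : ℝ → ℝ) :
    ∫ x, f x ∂bernLaw p = p * f 1 + (1 - p) * f 0 := by
  have h := integrable_bernLaw (p := p) f
  rw [bernLaw] at h ⊢
  rw [integral_add_measure h.left_of_add_measure h.right_of_add_measure]
  simp [hp₀, hp₁]

lemma mgf_id_bernLaw (hp₀ : 0 ≤ p) (hp₁ : p ≤ 1) (t : ℝ) :
    mgf id (bernLaw p) t = p * Real.exp t + (1 - p) := by
  simp [mgf, integral_bernLaw hp₀ hp₁]

lemma bernLaw_Ici_one : bernLaw p (Set.Ici 1) = ENNReal.ofReal p := by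
  simp [bernLaw]

lemma bernLaw_Ici_zero (hp₀ : 0 ≤ p) (hp₁ : p ≤ 1) : bernLaw p (Set.Ici 0) = 1 := by
  simp [bernLaw, ← ENNReal.ofReal_add hp₀ (sub_nonneg.2 hp₁)]

variable {ι : Type*} [Fintype ι]

lemma measureReal_le_sum_bernLaw_le (hp₀ : 0 < p) (hp₁ : p ≤ 1) (a : ℝ) :
    (Measure.pi fun _ : ι => bernLaw p).real {x | a ≤ ∑ i, x i} ≤
      2 ^ Fintype.card ι * p ^ a := by
  have hmgf : mgf id (bernLaw p) (-Real.log p) = 2 - p := by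
    rw [mgf_id_bernLaw hp₀.le hp₁, Real.exp_neg, Real.exp_log hp₀, mul_inv_cancel₀ hp₀.ne']
    ring
  calc (Measure.pi fun _ : ι => bernLaw p).real {x | a ≤ ∑ i, x i}
    _ ≤ Real.exp (-(-Real.log p) * a) *
          mgf (fun x => ∑ i, x i) (Measure.pi fun _ : ι => bernLaw p) (-Real.log p) :=
      measure_ge_le_exp_mul_mgf a (neg_nonneg.2 (Real.log_nonpos hp₀.le hp₁))
        (integrable_exp_mul_sum_measurePi _ fun _ => integrable_bernLaw _)
    _ = (2 - p) ^ Fintype.card ι * p ^ a := by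
      rw [mgf_sum_measurePi, Finset.prod_const, Finset.card_univ, hmgf, neg_neg,
        ← Real.rpow_def_of_pos hp₀, mul_comm]
    _ ≤ 2 ^ Fintype.card ι * p ^ a := by
      gcongr <;> linarith

lemma measure_Ici_indicator_bernLaw (hp₀ : 0 ≤ p) (hp₁ : p ≤ 1) (s : Finset ι) :
    (Measure.pi fun _ : ι => bernLaw p) (Set.Ici ((s : Set ι).indicator 1)) =
      ENNReal.ofReal p ^ s.card := by
  classical
  have hcoord (i : ι) : bernLaw p (Set.Ici ((s : Set ι).indicator 1 i)) =
      if i ∈ s then ENNReal.ofReal p else 1 := by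
    by_cases hi : i ∈ s <;> simp [hi, bernLaw_Ici_one, bernLaw_Ici_zero hp₀ hp₁]
  rw [← Set.pi_univ_Ici, Measure.pi_pi]
  simp [hcoord]

lemma pow_ceil_le_measureReal_le_sum_bernLaw {a : ℝ} (hp₀ : 0 ≤ p) (hp₁ : p ≤ 1)
    (ha : a ≤ Fintype.card ι) :
    p ^ ⌈a⌉₊ ≤ (Measure.pi fun _ : ι => bernLaw p).real {x | a ≤ ∑ i, x i} := by
  classical
  obtain ⟨s, -, hs⟩ := Finset.exists_subset_card_eq (s := (Finset.univ : Finset ι))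
    (Nat.ceil_le.2 ha)
  have hsub : Set.Ici ((s : Set ι).indicator 1) ⊆ {x : ι → ℝ | a ≤ ∑ i, x i} := fun x hx =>
    calc a ≤ s.card := hs ▸ Nat.le_ceil a
      _ = ∑ i, (s : Set ι).indicator 1 i := by simp [Set.indicator_apply]
      _ ≤ ∑ i, x i := Finset.sum_le_sum fun i _ => hx i
  calc p ^ ⌈a⌉₊
    _ = (Measure.pi fun _ : ι => bernLaw p).real (Set.Ici ((s : Set ι).indicator 1)) := by
      simp [measureReal_def, measure_Ici_indicator_bernLaw hp₀ hp₁, hs, hp₀]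
    _ ≤ (Measure.pi fun _ : ι => bernLaw p).real {x | a ≤ ∑ i, x i} := measureReal_mono hsub

lemma log_measureReal_le_sum_bernLaw_div_mem_Icc [Nonempty ι] {a : ℝ} (hp₀ : 0 < p)
    (hp₁ : p < 1) (ha : a ≤ Fintype.card ι) :
    Real.log ((Measure.pi fun _ : ι => bernLaw p).real {x | a ≤ ∑ i, x i}) /
        (Fintype.card ι * Real.log p) ∈
      Set.Icc (a / Fintype.card ι + Real.log 2 / Real.log p) (⌈a⌉₊ / Fintype.card ι) := by
  have hlower := pow_ceil_le_measureReal_le_sum_bernLaw hp₀.le hp₁.le ha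
  have hupper := measureReal_le_sum_bernLaw_le (ι := ι) hp₀ hp₁.le a
  have hn : (0 : ℝ) < Fintype.card ι := Nat.cast_pos.2 Fintype.card_pos
  have hlog : Real.log p < 0 := Real.log_neg hp₀ hp₁
  have hscale : Fintype.card ι * Real.log p < 0 := mul_neg_of_pos_of_neg hn hlog
  constructor
  · have h := Real.log_le_log ((pow_pos hp₀ _).trans_le hlower) hupper
    rw [Real.log_mul (by positivity) (by positivity), Real.log_pow, Real.log_rpow hp₀] at h
    rw [le_div_iff_of_neg hscale]
    refine h.trans_eq ?_
    field [hlog.ne]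
  · have h := Real.log_le_log (pow_pos hp₀ _) hlower
    rw [Real.log_pow] at h
    rw [div_le_iff_of_neg hscale]
    refine Eq.trans_le ?_ h
    field

end Bernoulli

theorem majority_of_rare_events_rate_general {α : Type*} {l : Filter α} {c : α → ℕ} {p : α → ℝ}
    {θ : ℝ} (hθ₀ : 0 ≤ θ) (hθ₁ : θ ≤ 1) (hc : Tendsto c l atTop) (hp : Tendsto p l (𝓝[>] 0)) :
    Tendsto (fun m =>
        Real.log ((Measure.pi fun _ : Fin (c m) => bernLaw (p m)).real
            {x | θ * c m ≤ ∑ j, x j}) /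
          (c m * Real.log (p m)))
      l (𝓝 θ) := by
  have hcR : Tendsto (fun m => (c m : ℝ)) l atTop := tendsto_natCast_atTop_atTop.comp hc
  have hlow : Tendsto (fun m => θ + Real.log 2 / Real.log (p m)) l (𝓝 θ) := by
    simpa using ((Real.tendsto_log_nhdsGT_zero.comp hp).const_div_atBot (Real.log 2)).const_add θ
  have hhigh : Tendsto (fun m => (⌈θ * c m⌉₊ : ℝ) / c m) l (𝓝 θ) :=
    (tendsto_nat_ceil_mul_div_atTop hθ₀).comp hcR
  have hmem : ∀ᶠ m in l,
      Real.log ((Measure.pi fun _ : Fin (c m) => bernLaw (p m)).real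
            {x | θ * c m ≤ ∑ j, x j}) / (c m * Real.log (p m)) ∈
        Set.Icc (θ + Real.log 2 / Real.log (p m)) (⌈θ * c m⌉₊ / c m) := by
    filter_upwards [hc.eventually_gt_atTop 0, hp.eventually (Ioo_mem_nhdsGT one_pos)]
      with m hcm ⟨hp₀, hp₁⟩
    have : Nonempty (Fin (c m)) := Fin.pos_iff_nonempty.1 hcm
    have ha : θ * c m ≤ Fintype.card (Fin (c m)) := by
      simpa using mul_le_of_le_one_left (Nat.cast_nonneg (c m)) hθ₁
    simpa [hcm.ne'] using log_measureReal_le_sum_bernLaw_div_mem_Icc hp₀ hp₁ ha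
  exact tendsto_of_tendsto_of_tendsto_of_le_of_le' hlow hhigh (hmem.mono fun _ h => h.1)
    (hmem.mono fun _ h => h.2)

/-- the probability that a majority of `c_m` independent
Bernoulli(`p_m`) variables equals `1` behaves like `p_m^{c_m/2}` on the
exponential scale:
`lim_{m→∞} log P(Σ_{j=1}^{c_m} Y_j ≥ c_m/2) / (c_m · log p_m) = 1/2`. -/
theorem majority_of_rare_events_rate (c : ℕ → ℕ) (p : ℕ → ℝ)
    (hc0 : ∀ m, 0 < c m) (hc : Tendsto c atTop atTop)
    (hp : ∀ m, p m ∈ Set.Ioo (0 : ℝ) 1)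
    (hlogp : Tendsto (fun m : ℕ => Real.log (p m)) atTop atBot) :
    Tendsto (fun m : ℕ =>
        Real.log (((Measure.pi fun _ : Fin (c m) => bernLaw (p m))
            {x | (c m : ℝ) / 2 ≤ ∑ j, x j}).toReal) /
          ((c m : ℝ) * Real.log (p m)))
      atTop (nhds (1 / 2)) := by
  have hp0 : Tendsto p atTop (𝓝[>] 0) :=
    (Real.tendsto_exp_atBot_nhdsGT.comp hlogp).congr fun m => Real.exp_log (hp m).1
  simpa only [measureReal_def, one_div_mul_eq_div] using
    majority_of_rare_events_rate_general (θ := 1 / 2) (by norm_num) (by norm_num) hc hp0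

end
end
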